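/- Let π be a degree sequence of a tree with boundary. A tree with boundary G with degree sequence π has the Faber-Krahn property in the class T_π of all trees with boundary with degree sequence π if and only if G is an SLO*-tree. Moreover G is then uniquely determined up to isomorphism. -/

import Mathlib

/-!
Why the theorem holds. Let `G` minimize the first Dirichlet eigenvalue `λ` among the trees with its
degree sequence, and let `f` be the positive first eigenfunction (`exists_perron`). Take two
interior vertices `v`, `w` and a set `Z` of vertices, each adjacent to exactly one of them, such
that `v` and `w` stay connected after removal of `Z`; re-attaching each vertex of `Z` to the other
of the two vertices produces a tree again. If this keeps the degree sequence and does not increase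
the energy of `f`, then by minimality the Rayleigh quotient of `f` is unchanged, so `f` is also a
first eigenfunction of the new tree; comparing the two eigenvalue equations at `v` gives a linear
relation (`exchange`). This rules out any exchange that alters the Laplacian of `f` at `v`.

Applied to one branch at each of two vertices, this is a switching principle (`Ctx.switch`): the
larger of two values hangs on the larger parent. With the tree rooted at a maximum of `f`, it
follows that `f` does not increase from parent to child (`Ctx.le_par`), from one height to the next
(`Ctx.le_of_height_lt`), and that children are ordered like their parents
(`Ctx.children_le_of_height_eq`). Ordering the vertices by height, then by their parents, then by
decreasing `f` therefore gives an order along which `f` does not increase (`Ctx.spiral_anti`), that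
is, an SLO-ordering. Moving several branches at once from `v` to `w` so as to interchange their
degrees shows that interior degrees increase along it (`Ctx.degree_mono`). So every minimizer is an
SLO*-tree (`isSLOStarTree_of_isMin`).

Conversely, in an SLO*-tree the degree sequence determines the degrees along the ordering, and
these determine the parent of each vertex because the parent map is monotone with prescribed fibre
sizes. Hence SLO*-trees with equal degree sequences are isomorphic (`iso_of_isSLOStarTree`). A
minimizer exists because the class is finite; it is an SLO*-tree, so every SLO*-tree of the class is
isomorphic to it and has the same eigenvalue.
-/

/-!
Common definitions for Faber-Krahn type inequalities for trees
(Bıyıkoğlu–Leydold, "Faber-Krahn Type Inequalities for Trees").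

A *tree (graph) with boundary* is a finite simple connected graph in which
boundary vertices are exactly the vertices of degree 1 and interior vertices
are the vertices of degree ≥ 2; both sets are required to be nonempty.
The Dirichlet operator is the Laplacian restricted to functions vanishing on
the boundary; `dirichletLambda` is its smallest eigenvalue.
-/

open Finset
open scoped Classical

noncomputable section

namespace FK

variable {V : Type*} [Fintype V] [DecidableEq V]

/-- A vertex is a boundary vertex iff it has degree `1`. -/
def IsBoundary (G : SimpleGraph V) (v : V) : Prop := G.degree v = 1

/-- A vertex is an interior vertex iff it has degree at least `2`. -/
def IsInterior (G : SimpleGraph V) (v : V) : Prop := 2 ≤ G.degree v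

/-- A tree with boundary: a tree with at least one interior and
one boundary vertex. -/
def IsTreeWithBoundary (G : SimpleGraph V) : Prop :=
  G.IsTree ∧ (∃ v, IsInterior G v) ∧ (∃ v, IsBoundary G v)

/-- A connected graph with boundary: every vertex is either a boundary vertex
(degree 1) or an interior vertex (degree ≥ 2), both kinds occur, and no edge
joins two boundary vertices. -/
def IsGraphWithBoundary (G : SimpleGraph V) : Prop :=
  G.Connected ∧ (∀ v, IsBoundary G v ∨ IsInterior G v) ∧
    (∃ v, IsInterior G v) ∧ (∃ v, IsBoundary G v) ∧
    (∀ v w, G.Adj v w → IsBoundary G v → ¬ IsBoundary G w)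

/-- The finset of interior vertices. -/
def interiorFinset (G : SimpleGraph V) : Finset V := univ.filter (fun v => IsInterior G v)

/-- The finset of boundary vertices. -/
def boundaryFinset (G : SimpleGraph V) : Finset V := univ.filter (fun v => IsBoundary G v)

/-- The degree sequence of `G`, as a multiset. -/
def degreeMultiset (G : SimpleGraph V) : Multiset ℕ := Finset.univ.val.map (fun v => G.degree v)

/-- The graph Laplacian `Δ = D - A` applied to a function `f : V → ℝ`. -/
def lapApply (G : SimpleGraph V) (f : V → ℝ) (v : V) : ℝ :=
  (G.degree v : ℝ) * f v - ∑ w ∈ G.neighborFinset v, f w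

/-- `f` (vanishing on the boundary, nonzero) is an eigenfunction of the
Dirichlet operator `Δ₀` with eigenvalue `μ`: the eigenvalue equation holds at
every interior vertex. -/
def IsDirichletEigenpair (G : SimpleGraph V) (μ : ℝ) (f : V → ℝ) : Prop :=
  f ≠ 0 ∧ (∀ v, IsBoundary G v → f v = 0) ∧
    ∀ v, IsInterior G v → lapApply G f v = μ * f v

/-- The first (smallest) Dirichlet eigenvalue `λ(G)`. -/
def dirichletLambda (G : SimpleGraph V) : ℝ :=
  sInf {μ : ℝ | ∃ f : V → ℝ, IsDirichletEigenpair G μ f}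

/-- The quadratic form `⟨Δ f, f⟩ = Σ_{(u,v)∈E} (f u - f v)²` of the Laplacian
(each edge counted once). -/
def quadForm (G : SimpleGraph V) (f : V → ℝ) : ℝ :=
  (∑ v, ∑ w ∈ G.neighborFinset v, (f v - f w) ^ 2) / 2

/-- The Rayleigh quotient `R_G(f)`. -/
def rayleigh (G : SimpleGraph V) (f : V → ℝ) : ℝ :=
  quadForm G f / ∑ v, f v ^ 2

/-- `w` is a child of `v` in the tree `G` rooted at `v₀`
(heights are distances from the root `v₀`). -/
def IsChild (G : SimpleGraph V) (v₀ v w : V) : Prop :=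
  G.Adj v w ∧ G.dist v₀ w = G.dist v₀ v + 1

/-- A spiral-like ordering (SLO-ordering) of the vertices of the tree `G`
rooted at `v₀`: a (strict) well-ordering `lt` satisfying (S1)-(S3). -/
def IsSLOOrdering (G : SimpleGraph V) (v₀ : V) (lt : V → V → Prop) : Prop :=
  IsStrictTotalOrder V lt ∧
  (∀ v w, lt v w → G.dist v₀ v ≤ G.dist v₀ w) ∧
  (∀ v₁ v₂ w₁ w₂, lt v₁ v₂ → IsChild G v₀ v₁ w₁ → IsChild G v₀ v₂ w₂ → lt w₁ w₂) ∧
  (∀ v w, lt v w → IsBoundary G v → IsBoundary G w)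

/-- A spiral-like ordering with increasing degrees (SLO*-ordering):
additionally (S4). -/
def IsSLOStarOrdering (G : SimpleGraph V) (v₀ : V) (lt : V → V → Prop) : Prop :=
  IsSLOOrdering G v₀ lt ∧
  ∀ v w, lt v w → IsInterior G v → IsInterior G w → G.degree v ≤ G.degree w

/-- An SLO-tree: a tree with boundary admitting an SLO-ordering. -/
def IsSLOTree (G : SimpleGraph V) : Prop :=
  IsTreeWithBoundary G ∧ ∃ (v₀ : V) (lt : V → V → Prop), IsSLOOrdering G v₀ lt

/-- An SLO*-tree: a tree with boundary admitting an SLO*-ordering. -/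
def IsSLOStarTree (G : SimpleGraph V) : Prop :=
  IsTreeWithBoundary G ∧ ∃ (v₀ : V) (lt : V → V → Prop), IsSLOStarOrdering G v₀ lt

end FK

namespace FK

/-- Membership in the class `T_π`: trees with boundary with degree sequence
(multiset) `π`. -/
def inClassPi (π : Multiset ℕ) {n : ℕ} (G : SimpleGraph (Fin n)) : Prop :=
  IsTreeWithBoundary G ∧ degreeMultiset G = π

/-- The Faber-Krahn property in `T_π`. -/
def hasFKPi (π : Multiset ℕ) (G : SimpleGraph (Fin (Multiset.card π))) : Prop :=
  inClassPi π G ∧ ∀ G' : SimpleGraph (Fin (Multiset.card π)), inClassPi π G' →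
    dirichletLambda G ≤ dirichletLambda G'

/-! ### The first Dirichlet eigenvalue and its positive eigenfunction -/

section
variable {V : Type*} [Fintype V]

lemma boundary_or_interior {G : SimpleGraph V} (hG : IsTreeWithBoundary G) (v : V) :
    IsBoundary G v ∨ IsInterior G v := by
  obtain ⟨u, hu⟩ := hG.2.1
  unfold IsInterior at hu
  obtain ⟨w, hw⟩ := (G.degree_pos_iff_exists_adj u).1 (by omega)
  have : Nontrivial V := ⟨u, w, hw.ne⟩
  have h : 0 < G.degree v := hG.1.connected.preconnected.degree_pos_of_nontrivial v
  unfold IsBoundary IsInterior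
  omega

lemma not_boundary_of_interior {G : SimpleGraph V} {v : V} (h : IsInterior G v) :
    ¬ IsBoundary G v := by
  unfold IsInterior at h; unfold IsBoundary; omega

lemma lapApply_eq (G : SimpleGraph V) (f : V → ℝ) (v : V) :
    lapApply G f v = ∑ w, if G.Adj v w then f v - f w else 0 := by
  unfold lapApply
  rw [← Finset.sum_filter, ← SimpleGraph.neighborFinset_eq_filter, Finset.sum_sub_distrib]
  simp

lemma quadForm_eq (G : SimpleGraph V) (f : V → ℝ) :
    quadForm G f = (∑ v, ∑ w, if G.Adj v w then (f v - f w) ^ 2 else 0) / 2 := by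
  unfold quadForm
  congr 1
  refine Finset.sum_congr rfl fun v _ => ?_
  rw [← Finset.sum_filter, ← SimpleGraph.neighborFinset_eq_filter]

/-- Green's formula for the graph Laplacian. -/
lemma green (G : SimpleGraph V) (f k : V → ℝ) :
    ∑ v, ∑ w, (if G.Adj v w then (f v - f w) * (k v - k w) else 0)
      = 2 * ∑ v, k v * lapApply G f v := by
  have h1 : ∑ v, ∑ w, (if G.Adj v w then (f v - f w) * k w else 0)
      = - ∑ v, ∑ w, (if G.Adj v w then (f v - f w) * k v else 0) := by
    rw [Finset.sum_comm, ← Finset.sum_neg_distrib]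
    refine Finset.sum_congr rfl fun v _ => ?_
    rw [← Finset.sum_neg_distrib]
    refine Finset.sum_congr rfl fun w _ => ?_
    by_cases h : G.Adj v w
    · simp only [h, h.symm, if_true]; ring
    · have h' : ¬ G.Adj w v := fun h' => h h'.symm
      simp [h, h']
  have h2 : ∑ v, k v * lapApply G f v
      = ∑ v, ∑ w, (if G.Adj v w then (f v - f w) * k v else 0) := by
    refine Finset.sum_congr rfl fun v _ => ?_
    rw [lapApply_eq, Finset.mul_sum]
    refine Finset.sum_congr rfl fun w _ => ?_
    split_ifs <;> ring
  have h3 : ∑ v, ∑ w, (if G.Adj v w then (f v - f w) * (k v - k w) else 0)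
      = ∑ v, ∑ w, (if G.Adj v w then (f v - f w) * k v else 0)
        - ∑ v, ∑ w, (if G.Adj v w then (f v - f w) * k w else 0) := by
    rw [← Finset.sum_sub_distrib]
    refine Finset.sum_congr rfl fun v _ => ?_
    rw [← Finset.sum_sub_distrib]
    refine Finset.sum_congr rfl fun w _ => ?_
    split_ifs <;> ring
  rw [h3, h1, h2]; ring

lemma quadForm_eq_sum_mul_lap (G : SimpleGraph V) (f : V → ℝ) :
    quadForm G f = ∑ v, f v * lapApply G f v := by
  have := green G f f
  rw [quadForm_eq]
  simp only [sq]
  linarith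

lemma quadForm_add_smul (G : SimpleGraph V) (f k : V → ℝ) (t : ℝ) :
    quadForm G (fun v => f v + t * k v)
      = quadForm G f + 2 * t * ∑ v, k v * lapApply G f v + t ^ 2 * quadForm G k := by
  have h : ∑ v, ∑ w, (if G.Adj v w then ((f v + t * k v) - (f w + t * k w)) ^ 2 else 0)
      = ∑ v, ∑ w, (if G.Adj v w then (f v - f w) ^ 2 else 0)
        + 2 * t * ∑ v, ∑ w, (if G.Adj v w then (f v - f w) * (k v - k w) else 0)
        + t ^ 2 * ∑ v, ∑ w, (if G.Adj v w then (k v - k w) ^ 2 else 0) := by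
    simp only [Finset.mul_sum, ← Finset.sum_add_distrib]
    refine Finset.sum_congr rfl fun v _ => Finset.sum_congr rfl fun w _ => ?_
    split_ifs <;> ring
  rw [quadForm_eq, quadForm_eq, quadForm_eq, h, green]
  ring

/-- A function attaining the variational lower bound `μ` satisfies the eigenvalue equation. -/
lemma lap_eq_of_minimal (G : SimpleGraph V) {μ : ℝ} {f : V → ℝ}
    (hμ : ∀ k : V → ℝ, (∀ v, IsBoundary G v → k v = 0) → μ * ∑ v, k v ^ 2 ≤ quadForm G k)
    (hf : ∀ v, IsBoundary G v → f v = 0) (hle : quadForm G f ≤ μ * ∑ v, f v ^ 2)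
    {v : V} (hv : IsInterior G v) : lapApply G f v = μ * f v := by
  set k : V → ℝ := Pi.single v 1 with hk
  have hkb : ∀ u, IsBoundary G u → k u = 0 := by
    intro u hu
    have : u ≠ v := by
      rintro rfl
      unfold IsBoundary at hu; unfold IsInterior at hv; omega
    simp [hk, this]
  set c := lapApply G f v - μ * f v with hc
  set C := quadForm G k - μ with hC
  have s1 : ∑ u, k u * lapApply G f u = lapApply G f v := by
    simp [hk, Pi.single_apply]
  have s2 : ∑ u, k u ^ 2 = 1 := by
    simp [hk, Pi.single_apply]
  have s3 : ∑ u, k u * f u = f v := by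
    simp [hk, Pi.single_apply]
  have hC0 : 0 ≤ C := by
    have := hμ k hkb
    rw [s2] at this; linarith
  have key : ∀ t : ℝ, 0 ≤ 2 * t * c + t ^ 2 * C := by
    intro t
    have h1 := hμ (fun u => f u + t * k u) (fun u hu => by simp [hf u hu, hkb u hu])
    rw [quadForm_add_smul, s1] at h1
    have h2 : ∑ u, (f u + t * k u) ^ 2 = ∑ u, f u ^ 2 + 2 * t * ∑ u, k u * f u
        + t ^ 2 * ∑ u, k u ^ 2 := by
      simp only [Finset.mul_sum, ← Finset.sum_add_distrib]
      exact Finset.sum_congr rfl fun u _ => by ring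
    rw [h2, s2, s3] at h1
    rw [hc, hC]
    nlinarith
  have h := key (-c / (C + 1))
  have hp : 0 < C + 1 := by linarith
  have e : 2 * (-c / (C + 1)) * c + (-c / (C + 1)) ^ 2 * C
      = -(c ^ 2 * (C + 2)) / (C + 1) ^ 2 := by
    field_simp; ring
  rw [e] at h
  have h' : c ^ 2 * (C + 2) ≤ 0 := by
    by_contra hcon
    push Not at hcon
    have : -(c ^ 2 * (C + 2)) / (C + 1) ^ 2 < 0 := by
      apply div_neg_of_neg_of_pos <;> [linarith; positivity]
    linarith
  have hc2 : c ^ 2 = 0 := by nlinarith [sq_nonneg c]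
  have : c = 0 := by simpa using hc2
  rw [hc] at this; linarith

/-- By compactness of the unit sphere, the Rayleigh quotient attains its minimum. -/
lemma exists_minimizer (G : SimpleGraph V) (hG : IsTreeWithBoundary G) :
    ∃ f : V → ℝ, (∀ v, IsBoundary G v → f v = 0) ∧ ∑ v, f v ^ 2 = 1 ∧
      ∀ k : V → ℝ, (∀ v, IsBoundary G v → k v = 0) →
        quadForm G f * ∑ v, k v ^ 2 ≤ quadForm G k := by
  obtain ⟨-, ⟨v₀, hv₀⟩, -⟩ := hG
  set K : Set (V → ℝ) := {g | ∑ v, g v ^ 2 = 1} ∩ {g | ∀ v, IsBoundary G v → g v = 0} with hK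
  have hcl : IsClosed K := by
    apply IsClosed.inter
    · exact isClosed_eq (by fun_prop) continuous_const
    · have : {g : V → ℝ | ∀ v, IsBoundary G v → g v = 0}
          = ⋂ v, ⋂ (_ : IsBoundary G v), {g : V → ℝ | g v = 0} := by
        ext; simp
      rw [this]
      exact isClosed_iInter fun v => isClosed_iInter fun _ =>
        isClosed_eq (continuous_apply v) continuous_const
  have hsub : K ⊆ Set.Icc (fun _ => -1) (fun _ => 1) := by
    rintro g ⟨hg, -⟩
    have hb : ∀ v, g v ^ 2 ≤ 1 := fun v => by
      rw [← hg]
      exact Finset.single_le_sum (f := fun v => g v ^ 2) (fun i _ => sq_nonneg _)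
        (Finset.mem_univ v)
    exact ⟨fun v => (abs_le.1 ((sq_le_one_iff_abs_le_one _).1 (hb v))).1,
      fun v => (abs_le.1 ((sq_le_one_iff_abs_le_one _).1 (hb v))).2⟩
  have hcomp : IsCompact K := isCompact_Icc.of_isClosed_subset hcl hsub
  have hne : K.Nonempty := by
    refine ⟨Pi.single v₀ 1, by simp [Pi.single_apply], fun u hu => ?_⟩
    have : u ≠ v₀ := by
      rintro rfl
      unfold IsBoundary at hu; unfold IsInterior at hv₀; omega
    simp [this]
  have hcont : Continuous (quadForm G) := by
    unfold quadForm; fun_prop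
  obtain ⟨f, ⟨hf1, hf2⟩, hmin⟩ := hcomp.exists_isMinOn hne hcont.continuousOn
  refine ⟨f, hf2, hf1, fun k hk => ?_⟩
  by_cases h0 : ∑ v, k v ^ 2 = 0
  · rw [h0, mul_zero]
    unfold quadForm; positivity
  have hpos : 0 < ∑ v, k v ^ 2 := lt_of_le_of_ne (Finset.sum_nonneg fun _ _ => sq_nonneg _)
    (Ne.symm h0)
  set s := Real.sqrt (∑ v, k v ^ 2) with hs
  have hs0 : 0 < s := Real.sqrt_pos.2 hpos
  have hss : s ^ 2 = ∑ v, k v ^ 2 := Real.sq_sqrt hpos.le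
  have hmem : (fun v => k v / s) ∈ K := by
    refine ⟨?_, fun v hv => by simp [hk v hv]⟩
    show ∑ v, (k v / s) ^ 2 = 1
    simp only [div_pow, ← Finset.sum_div]
    rw [hss]; field_simp
  have h1 : quadForm G f ≤ quadForm G (fun v => k v / s) := hmin hmem
  have h2 : quadForm G (fun v => k v / s) = quadForm G k / s ^ 2 := by
    unfold quadForm
    rw [div_right_comm]
    simp only [Finset.sum_div, ← sub_div, div_pow]
  rw [h2, le_div_iff₀ (by positivity), hss] at h1
  exact h1

/-- The first Dirichlet eigenvalue is the minimum of the Rayleigh quotient. -/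
lemma dirichletLambda_spec (G : SimpleGraph V) (hG : IsTreeWithBoundary G) :
    (∀ k : V → ℝ, (∀ v, IsBoundary G v → k v = 0) →
        dirichletLambda G * ∑ v, k v ^ 2 ≤ quadForm G k) ∧
    ∃ f : V → ℝ, (∀ v, IsBoundary G v → f v = 0) ∧ f ≠ 0 ∧
      quadForm G f = dirichletLambda G * ∑ v, f v ^ 2 := by
  obtain ⟨f, hb, h1, hmin⟩ := exists_minimizer G hG
  have hne : f ≠ 0 := by rintro rfl; simp at h1
  have hlam : dirichletLambda G = quadForm G f := by
    apply IsLeast.csInf_eq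
    refine ⟨⟨f, hne, hb, fun v hv => lap_eq_of_minimal G hmin hb (by rw [h1, mul_one]) hv⟩, ?_⟩
    rintro μ ⟨g, hg0, hgb, hge⟩
    have hq : quadForm G g = μ * ∑ v, g v ^ 2 := by
      rw [quadForm_eq_sum_mul_lap, Finset.mul_sum]
      refine Finset.sum_congr rfl fun v _ => ?_
      rcases boundary_or_interior hG v with hv | hv
      · simp [hgb v hv]
      · rw [hge v hv]; ring
    have hpos : 0 < ∑ v, g v ^ 2 := by
      obtain ⟨v, hv⟩ := Function.ne_iff.1 hg0
      exact Finset.sum_pos' (fun _ _ => sq_nonneg _) ⟨v, Finset.mem_univ v, by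
        have : g v ≠ 0 := hv
        positivity⟩
    have := hmin g hgb
    rw [hq] at this
    exact le_of_mul_le_mul_right this hpos
  exact ⟨fun k hk => hlam ▸ hmin k hk, f, hb, hne, by rw [h1, hlam, mul_one]⟩

/-- Existence of a positive first eigenfunction. -/
lemma exists_perron (G : SimpleGraph V) (hG : IsTreeWithBoundary G) :
    0 < dirichletLambda G ∧ ∃ f : V → ℝ, (∀ v, IsBoundary G v → f v = 0) ∧
      (∀ v, IsInterior G v → 0 < f v) ∧
      (∀ v, IsInterior G v → lapApply G f v = dirichletLambda G * f v) ∧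
      quadForm G f = dirichletLambda G * ∑ v, f v ^ 2 := by
  obtain ⟨hmin, g, hgb, hg0, hgq⟩ := dirichletLambda_spec G hG
  set f : V → ℝ := fun v => |g v| with hf
  have hfb : ∀ v, IsBoundary G v → f v = 0 := fun v hv => by simp [hf, hgb v hv]
  have hsq : ∑ v, f v ^ 2 = ∑ v, g v ^ 2 := by simp [hf]
  have hfq : quadForm G f ≤ dirichletLambda G * ∑ v, f v ^ 2 := by
    rw [hsq, ← hgq]
    unfold quadForm
    refine div_le_div_of_nonneg_right (Finset.sum_le_sum fun v _ => Finset.sum_le_sum fun w _ => ?_)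
      zero_le_two
    exact sq_le_sq.2 (abs_abs_sub_abs_le_abs_sub _ _)
  have hlap : ∀ v, IsInterior G v → lapApply G f v = dirichletLambda G * f v :=
    fun v hv => lap_eq_of_minimal G hmin hfb hfq hv
  have hf0 : ∀ v, 0 ≤ f v := fun v => abs_nonneg _
  have hpos : ∀ v, IsInterior G v → 0 < f v := by
    by_contra hcon
    push Not at hcon
    obtain ⟨v₀, hv₀, hz⟩ := hcon
    -- the zeros at interior vertices, with the leaves attached to them, are closed under adjacency
    set S : Set V := {v | (IsInterior G v ∧ f v = 0) ∨
      (IsBoundary G v ∧ ∃ u, G.Adj v u ∧ IsInterior G u ∧ f u = 0)} with hS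
    have hstep : ∀ v w, G.Adj v w → v ∈ S → w ∈ S := by
      rintro v w hvw (⟨hv, hv0⟩ | ⟨hv, u, hvu, hu, hu0⟩)
      · have h := hlap v hv
        rw [lapApply_eq, hv0, mul_zero] at h
        have h2 : ∑ w, (if G.Adj v w then f w else 0) = 0 := by
          rw [← neg_eq_zero, ← Finset.sum_neg_distrib]
          refine Eq.trans (Finset.sum_congr rfl fun w _ => ?_) h
          split_ifs <;> ring
        have h3 := (Finset.sum_eq_zero_iff_of_nonneg (fun w _ => by
          split_ifs <;> simp [hf0])).1 h2 w (Finset.mem_univ w)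
        simp only [hvw, if_true] at h3
        rcases boundary_or_interior hG w with hw | hw
        · exact Or.inr ⟨hw, v, hvw.symm, hv, hv0⟩
        · exact Or.inl ⟨hw, h3⟩
      · have : u = w := by
          unfold IsBoundary at hv
          obtain ⟨x, hx⟩ := Finset.card_eq_one.1 ((G.card_neighborFinset_eq_degree v).trans hv)
          have h1 : u ∈ G.neighborFinset v := by simpa using hvu
          have h2 : w ∈ G.neighborFinset v := by simpa using hvw
          rw [hx, Finset.mem_singleton] at h1 h2
          rw [h1, h2]
        subst this
        exact Or.inl ⟨hu, hu0⟩
    have hall : ∀ w, w ∈ S := by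
      intro w
      obtain ⟨p⟩ := hG.1.connected.preconnected v₀ w
      have h0 : v₀ ∈ S := Or.inl ⟨hv₀, le_antisymm hz (hf0 _)⟩
      clear hz hv₀
      induction p with
      | nil => exact h0
      | cons h _ ih => exact ih (hstep _ _ h h0)
    apply hg0
    funext v
    rcases hall v with ⟨-, h⟩ | ⟨h, -⟩
    · simpa [hf] using h
    · exact hgb v h
  have hfq' : quadForm G f = dirichletLambda G * ∑ v, f v ^ 2 := le_antisymm hfq (hmin f hfb)
  refine ⟨?_, f, hfb, hpos, hlap, hfq'⟩
  by_contra hneg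
  push Not at hneg
  have hq0 : quadForm G f = 0 := by
    apply le_antisymm
    · rw [hfq']
      exact mul_nonpos_of_nonpos_of_nonneg hneg (Finset.sum_nonneg fun _ _ => sq_nonneg _)
    · unfold quadForm; positivity
  have hadj : ∀ v w, G.Adj v w → f v = f w := by
    intro v w hvw
    rw [quadForm_eq, div_eq_zero_iff] at hq0
    have h1 := (Finset.sum_eq_zero_iff_of_nonneg (fun v _ => Finset.sum_nonneg fun w _ => by
      split_ifs <;> positivity)).1 (hq0.resolve_right (by norm_num)) v (Finset.mem_univ v)
    have h2 := (Finset.sum_eq_zero_iff_of_nonneg (fun w _ => by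
      split_ifs <;> positivity)).1 h1 w (Finset.mem_univ w)
    simp only [hvw, if_true] at h2
    have := pow_eq_zero_iff (two_ne_zero) |>.1 h2
    linarith
  obtain ⟨u, hu⟩ := hG.2.1
  obtain ⟨b, hb⟩ := hG.2.2
  obtain ⟨p⟩ := hG.1.connected.preconnected u b
  have : f u = f b := by
    clear hu hb
    induction p with
    | nil => rfl
    | cons h _ ih => exact (hadj _ _ h).trans ih
  have := hpos u hu
  linarith [hfb b hb]

end

/-! ### Exchanging branches between two vertices -/

section
variable {V : Type*}

/-- The exchange of `G` at `v`, `w` along `Z`: for every `z ∈ Z` the adjacencies of `z` to `v` and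
to `w` are interchanged; everything else is kept. -/
def exch (G : SimpleGraph V) (v w : V) (Z : Finset V) : SimpleGraph V where
  Adj p q := if p ∈ Z ∨ q ∈ Z then G.Adj (Equiv.swap v w p) (Equiv.swap v w q) else G.Adj p q
  symm := ⟨fun p q h => by
    simp only [or_comm (a := q ∈ Z)]
    split_ifs at h ⊢
    · exact h.symm
    · exact h.symm⟩
  loopless := ⟨fun p h => by
    split_ifs at h
    · exact G.loopless.irrefl _ h
    · exact G.loopless.irrefl _ h⟩

/-- The graph `G` with all edges at vertices of `Z` removed. -/
def avoid (G : SimpleGraph V) (Z : Finset V) : SimpleGraph V where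
  Adj p q := G.Adj p q ∧ p ∉ Z ∧ q ∉ Z
  symm := ⟨fun _ _ h => ⟨h.1.symm, h.2.2, h.2.1⟩⟩
  loopless := ⟨fun p h => G.loopless.irrefl p h.1⟩

variable {G : SimpleGraph V} {v w : V} {Z : Finset V}

lemma exch_adj_v (hv : v ∉ Z) (hw : w ∉ Z) (q : V) : (exch G v w Z).Adj v q ↔
    if q ∈ Z then G.Adj w q else G.Adj v q := by
  unfold exch
  by_cases hq : q ∈ Z
  · have h1 : q ≠ v := fun h => hv (h ▸ hq)
    have h2 : q ≠ w := fun h => hw (h ▸ hq)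
    simp [hq, Equiv.swap_apply_of_ne_of_ne h1 h2]
  · simp [hq, hv]

lemma exch_adj_w (hv : v ∉ Z) (hw : w ∉ Z) (q : V) : (exch G v w Z).Adj w q ↔
    if q ∈ Z then G.Adj v q else G.Adj w q := by
  unfold exch
  by_cases hq : q ∈ Z
  · have h1 : q ≠ v := fun h => hv (h ▸ hq)
    have h2 : q ≠ w := fun h => hw (h ▸ hq)
    simp [hq, Equiv.swap_apply_of_ne_of_ne h1 h2]
  · simp [hq, hw]

lemma exch_adj_Z (hv : v ∉ Z) (hw : w ∉ Z) {z : V} (hz : z ∈ Z) (q : V) : (exch G v w Z).Adj z q ↔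
    G.Adj z (Equiv.swap v w q) := by
  have h1 : z ≠ v := fun h => hv (h ▸ hz)
  have h2 : z ≠ w := fun h => hw (h ▸ hz)
  unfold exch
  simp [hz, Equiv.swap_apply_of_ne_of_ne h1 h2]

lemma exch_adj_other (hv : v ∉ Z) (hw : w ∉ Z) {u : V} (hz : u ∉ Z) (h1 : u ≠ v) (h2 : u ≠ w) (q : V) :
    (exch G v w Z).Adj u q ↔ G.Adj u q := by
  unfold exch
  by_cases hq : q ∈ Z
  · have h3 : q ≠ v := fun h => hv (h ▸ hq)
    have h4 : q ≠ w := fun h => hw (h ▸ hq)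
    simp [hq, Equiv.swap_apply_of_ne_of_ne h1 h2, Equiv.swap_apply_of_ne_of_ne h3 h4]
  · simp [hq, hz]

variable [Fintype V]

lemma degree_eq_sum (G : SimpleGraph V) (u : V) :
    (G.degree u : ℝ) = ∑ q, if G.Adj u q then 1 else 0 := by
  rw [← G.card_neighborFinset_eq_degree, SimpleGraph.neighborFinset_eq_filter]
  simp

/-- The signed incidence of `z` with the pair `v`, `w`: `1` if `z` is adjacent to `v` only, `-1` if
it is adjacent to `w` only, and `0` otherwise. -/
def sgn (G : SimpleGraph V) (v w z : V) : ℝ :=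
  (if G.Adj v z then 1 else 0) - (if G.Adj w z then 1 else 0)

lemma exch_sum_v (hv : v ∉ Z) (hw : w ∉ Z) (F : V → ℝ) :
    ∑ q, (if (exch G v w Z).Adj v q then F q else 0)
      = ∑ q, (if G.Adj v q then F q else 0) - ∑ z ∈ Z, sgn G v w z * F z := by
  have : ∑ z ∈ Z, sgn G v w z * F z = ∑ z, if z ∈ Z then sgn G v w z * F z else 0 := by
    simp
  rw [this, ← Finset.sum_sub_distrib]
  refine Finset.sum_congr rfl fun q _ => ?_
  simp only [exch_adj_v hv hw]
  unfold sgn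
  split_ifs <;> simp

lemma exch_sum_w (hv : v ∉ Z) (hw : w ∉ Z) (F : V → ℝ) :
    ∑ q, (if (exch G v w Z).Adj w q then F q else 0)
      = ∑ q, (if G.Adj w q then F q else 0) + ∑ z ∈ Z, sgn G v w z * F z := by
  have : ∑ z ∈ Z, sgn G v w z * F z = ∑ z, if z ∈ Z then sgn G v w z * F z else 0 := by
    simp
  rw [this, ← Finset.sum_add_distrib]
  refine Finset.sum_congr rfl fun q _ => ?_
  simp only [exch_adj_w hv hw]
  unfold sgn
  split_ifs <;> simp

lemma exch_sum_Z (hv : v ∉ Z) (hw : w ∉ Z) {z : V} (hz : z ∈ Z) (hvw : v ≠ w) (F : V → ℝ) :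
    ∑ q, (if (exch G v w Z).Adj z q then F q else 0)
      = ∑ q, (if G.Adj z q then F q else 0) + sgn G v w z * (F w - F v) := by
  have h1 : ∑ q, (if (exch G v w Z).Adj z q then F q else 0)
      = ∑ q, (if G.Adj z q then F (Equiv.swap v w q) else 0) := by
    rw [← Equiv.sum_comp (Equiv.swap v w)]
    refine Finset.sum_congr rfl fun q _ => ?_
    simp [exch_adj_Z hv hw hz]
  have h2 : ∀ F' : V → ℝ, ∑ q, (if G.Adj z q then F' q else 0)
      = (if G.Adj z v then F' v else 0) + (if G.Adj z w then F' w else 0)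
        + ∑ q ∈ (univ.erase v).erase w, (if G.Adj z q then F' q else 0) := by
    intro F'
    rw [← Finset.add_sum_erase _ _ (Finset.mem_univ v),
      ← Finset.add_sum_erase _ _ (show w ∈ univ.erase v by simp [hvw.symm])]
    ring
  rw [h1, h2, h2 F]
  have h3 : ∑ q ∈ (univ.erase v).erase w, (if G.Adj z q then F (Equiv.swap v w q) else 0)
      = ∑ q ∈ (univ.erase v).erase w, (if G.Adj z q then F q else 0) := by
    refine Finset.sum_congr rfl fun q hq => ?_
    simp only [Finset.mem_erase, Finset.mem_univ, and_true] at hq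
    rw [Equiv.swap_apply_of_ne_of_ne hq.2 hq.1]
  rw [h3]
  unfold sgn
  rw [G.adj_comm v z, G.adj_comm w z]
  simp only [Equiv.swap_apply_left, Equiv.swap_apply_right]
  split_ifs <;> ring

lemma exch_degree_v (hv : v ∉ Z) (hw : w ∉ Z) : ((exch G v w Z).degree v : ℝ)
    = G.degree v - ∑ z ∈ Z, sgn G v w z := by
  rw [degree_eq_sum, degree_eq_sum, exch_sum_v hv hw]; simp

lemma exch_degree_w (hv : v ∉ Z) (hw : w ∉ Z) : ((exch G v w Z).degree w : ℝ)
    = G.degree w + ∑ z ∈ Z, sgn G v w z := by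
  rw [degree_eq_sum, degree_eq_sum, exch_sum_w hv hw]; simp

lemma exch_degree_other (hv : v ∉ Z) (hw : w ∉ Z) (hvw : v ≠ w) {u : V} (h1 : u ≠ v) (h2 : u ≠ w) :
    (exch G v w Z).degree u = G.degree u := by
  have : ((exch G v w Z).degree u : ℝ) = G.degree u := by
    rw [degree_eq_sum, degree_eq_sum]
    by_cases hz : u ∈ Z
    · rw [exch_sum_Z hv hw hz hvw]; simp
    · simp only [exch_adj_other hv hw hz h1 h2]
  exact_mod_cast this

lemma exch_lap_v (hv : v ∉ Z) (hw : w ∉ Z) (f : V → ℝ) : lapApply (exch G v w Z) f v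
    = lapApply G f v - ∑ z ∈ Z, sgn G v w z * (f v - f z) := by
  rw [lapApply_eq, lapApply_eq, exch_sum_v hv hw (fun q => f v - f q)]

lemma exch_quadForm (hv : v ∉ Z) (hw : w ∉ Z) (hvw : v ≠ w) (f : V → ℝ) : quadForm (exch G v w Z) f
    = quadForm G f + (f w - f v) * ∑ z ∈ Z, sgn G v w z * (f w + f v - 2 * f z) := by
  have split : ∀ g : V → ℝ, ∑ u, g u = g v + g w + ∑ u ∈ Z, g u
      + ∑ u ∈ ((univ.erase v).erase w) \ Z, g u := by
    intro g
    rw [← Finset.add_sum_erase _ _ (Finset.mem_univ v),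
      ← Finset.add_sum_erase _ _ (show w ∈ univ.erase v by simp [hvw.symm]),
      ← Finset.sum_sdiff (s₁ := Z) (s₂ := (univ.erase v).erase w)]
    · ring
    · intro z hz
      simp only [Finset.mem_erase, Finset.mem_univ, and_true]
      exact ⟨fun h => hw (h ▸ hz), fun h => hv (h ▸ hz)⟩
  rw [quadForm_eq, quadForm_eq, split, split (fun u => ∑ q, _)]
  rw [exch_sum_v hv hw (fun q => (f v - f q) ^ 2),
    exch_sum_w hv hw (fun q => (f w - f q) ^ 2)]
  have h1 : ∑ z ∈ Z, ∑ q, (if (exch G v w Z).Adj z q then (f z - f q) ^ 2 else 0)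
      = ∑ z ∈ Z, ∑ q, (if G.Adj z q then (f z - f q) ^ 2 else 0)
        + ∑ z ∈ Z, sgn G v w z * ((f z - f w) ^ 2 - (f z - f v) ^ 2) := by
    rw [← Finset.sum_add_distrib]
    exact Finset.sum_congr rfl fun z hz => exch_sum_Z hv hw hz hvw (fun q => (f z - f q) ^ 2)
  have h2 : ∑ u ∈ ((univ.erase v).erase w) \ Z,
      ∑ q, (if (exch G v w Z).Adj u q then (f u - f q) ^ 2 else 0)
      = ∑ u ∈ ((univ.erase v).erase w) \ Z, ∑ q, (if G.Adj u q then (f u - f q) ^ 2 else 0) := by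
    refine Finset.sum_congr rfl fun u hu => ?_
    simp only [Finset.mem_sdiff, Finset.mem_erase, Finset.mem_univ, and_true] at hu
    simp only [exch_adj_other hv hw hu.2 hu.1.2 hu.1.1]
  rw [h1, h2]
  have h3 : (f w - f v) * ∑ z ∈ Z, sgn G v w z * (f w + f v - 2 * f z)
      = (∑ z ∈ Z, sgn G v w z * (f w - f z) ^ 2 - ∑ z ∈ Z, sgn G v w z * (f v - f z) ^ 2
        + ∑ z ∈ Z, sgn G v w z * ((f z - f w) ^ 2 - (f z - f v) ^ 2)) / 2 := by
    rw [← Finset.sum_sub_distrib, ← Finset.sum_add_distrib, Finset.mul_sum, Finset.sum_div]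
    exact Finset.sum_congr rfl fun z _ => by ring
  rw [h3]
  ring

/-- The exchange keeps the graph connected: an edge from `z ∈ Z` to `v` is replaced by one to `w`,
from which `v` is reached without using `Z`. -/
lemma exch_connected (hv : v ∉ Z) (hw : w ∉ Z) (hG : G.Connected) (hr : (avoid G Z).Reachable v w) :
    (exch G v w Z).Connected := by
  set G' := exch G v w Z with hG'
  have hle : avoid G Z ≤ G' := by
    intro p q h
    simp [hG', exch, h.2.1, h.2.2, h.1]
  have hr' : G'.Reachable v w := hr.mono hle
  have hZ : ∀ z q, z ∈ Z → G.Adj z q → G'.Reachable z q := by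
    intro z q hz h
    by_cases h1 : q = v
    · subst h1
      have : G'.Adj z w := by
        rw [hG', exch_adj_Z hv hw hz]; simpa using h
      exact this.reachable.trans hr'.symm
    by_cases h2 : q = w
    · subst h2
      have : G'.Adj z v := by
        rw [hG', exch_adj_Z hv hw hz]; simpa using h
      exact this.reachable.trans hr'
    have : G'.Adj z q := by
      rw [hG', exch_adj_Z hv hw hz, Equiv.swap_apply_of_ne_of_ne h1 h2]; exact h
    exact this.reachable
  have hstep : ∀ p q, G.Adj p q → G'.Reachable p q := by
    intro p q h
    by_cases hp : p ∈ Z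
    · exact hZ p q hp h
    by_cases hq : q ∈ Z
    · exact (hZ q p hq h.symm).symm
    · exact (hle ⟨h, hp, hq⟩ : G'.Adj p q).reachable
  have : Nonempty V := ⟨v⟩
  refine ⟨fun p q => ?_⟩
  obtain ⟨P⟩ := hG.preconnected p q
  induction P with
  | nil => exact SimpleGraph.Reachable.refl _
  | cons h _ ih => exact (hstep _ _ h).trans ih

/-- The degree multiset determines the number of edges, so a connected graph with the degree
multiset of a tree is a tree. -/
lemma isTree_of_degreeMultiset {G G' : SimpleGraph V} (hG : G.IsTree) (hc : G'.Connected)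
    (hd : degreeMultiset G' = degreeMultiset G) : G'.IsTree := by
  have h1 : ∑ u, G'.degree u = ∑ u, G.degree u := congrArg Multiset.sum hd
  rw [SimpleGraph.sum_degrees_eq_twice_card_edges, SimpleGraph.sum_degrees_eq_twice_card_edges]
    at h1
  have h2 := hG.card_edgeFinset
  rw [SimpleGraph.isTree_iff_connected_and_card]
  refine ⟨hc, ?_⟩
  rw [Nat.card_eq_fintype_card, ← SimpleGraph.edgeFinset_card, Nat.card_eq_fintype_card]
  omega

/-- `G` minimizes the first Dirichlet eigenvalue among the trees with its vertex set and degree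
multiset. -/
def IsMin (G : SimpleGraph V) : Prop :=
  ∀ G' : SimpleGraph V, IsTreeWithBoundary G' → degreeMultiset G' = degreeMultiset G →
    dirichletLambda G ≤ dirichletLambda G'

/-- `f` is a first Dirichlet eigenfunction of `G`, positive on the interior. -/
structure IsPerron (G : SimpleGraph V) (f : V → ℝ) : Prop where
  bdry : ∀ v, IsBoundary G v → f v = 0
  pos : ∀ v, IsInterior G v → 0 < f v
  lap : ∀ v, IsInterior G v → lapApply G f v = dirichletLambda G * f v
  quad : quadForm G f = dirichletLambda G * ∑ v, f v ^ 2

/-- In a minimizing tree, an exchange that keeps or swaps the degrees of `v` and `w` (so that it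
preserves the degree multiset) and does not increase the energy of the first eigenfunction `f`
leaves `f` a first eigenfunction, hence does not change the Laplacian of `f` at `v`. -/
lemma exchange {f : V → ℝ} (hT : IsTreeWithBoundary G) (hmin : IsMin G) (hf : IsPerron G f)
    (hvw : v ≠ w) (hr : (avoid G Z).Reachable v w)
    (hvi : IsInterior G v) (hwi : IsInterior G w)
    (hdeg : ∑ z ∈ Z, sgn G v w z = 0 ∨ ∑ z ∈ Z, sgn G v w z = (G.degree v : ℝ) - G.degree w)
    (hE : (f w - f v) * ∑ z ∈ Z, sgn G v w z * (f w + f v - 2 * f z) ≤ 0) :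
    ∑ z ∈ Z, sgn G v w z * (f v - f z) = 0 := by
  have hv : v ∉ Z := by
    obtain ⟨p⟩ := hr
    cases p with
    | nil => exact absurd rfl hvw
    | cons h _ => exact h.2.1
  have hw : w ∉ Z := by
    obtain ⟨p⟩ := hr.symm
    cases p with
    | nil => exact absurd rfl hvw
    | cons h _ => exact h.2.1
  set G' := exch G v w Z with hG'
  have hdv : (G'.degree v : ℝ) = _ := exch_degree_v (G := G) hv hw
  have hdw : (G'.degree w : ℝ) = _ := exch_degree_w (G := G) hv hw
  have hdo : ∀ u, u ≠ v → u ≠ w → G'.degree u = G.degree u :=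
    fun u h1 h2 => exch_degree_other hv hw hvw h1 h2
  have hσ : ∃ σ : Equiv.Perm V, (∀ u, G'.degree u = G.degree (σ u)) ∧
      (σ v = v ∨ σ v = w) ∧ (σ w = w ∨ σ w = v) := by
    rcases hdeg with h | h
    · refine ⟨Equiv.refl V, fun u => ?_, Or.inl rfl, Or.inl rfl⟩
      rw [h] at hdv hdw
      by_cases h1 : u = v
      · subst h1; simp only [sub_zero] at hdv; exact_mod_cast hdv
      by_cases h2 : u = w
      · subst h2; simp only [add_zero] at hdw; exact_mod_cast hdw
      exact hdo u h1 h2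
    · refine ⟨Equiv.swap v w, fun u => ?_, Or.inr (by simp), Or.inr (by simp)⟩
      rw [h] at hdv hdw
      by_cases h1 : u = v
      · subst h1; simp only [sub_sub_cancel] at hdv
        rw [Equiv.swap_apply_left]; exact_mod_cast hdv
      by_cases h2 : u = w
      · subst h2; simp only [add_sub_cancel] at hdw
        rw [Equiv.swap_apply_right]; exact_mod_cast hdw
      rw [Equiv.swap_apply_of_ne_of_ne h1 h2]
      exact hdo u h1 h2
  obtain ⟨σ, hσd, hσv, hσw⟩ := hσ
  have hmult : degreeMultiset G' = degreeMultiset G := by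
    unfold degreeMultiset
    have : (fun u => G'.degree u) = (fun u => G.degree u) ∘ σ := funext hσd
    rw [this, ← Multiset.map_map]
    congr 1
    exact Multiset.map_univ_val_equiv σ
  have hvi' : IsInterior G' v := by
    unfold IsInterior at *
    rw [hσd]; rcases hσv with h | h <;> rw [h] <;> assumption
  have hwi' : IsInterior G' w := by
    unfold IsInterior at *
    rw [hσd]; rcases hσw with h | h <;> rw [h] <;> assumption
  have hbd : ∀ u, IsBoundary G' u ↔ IsBoundary G u := by
    intro u
    by_cases h1 : u = v
    · subst h1
      exact iff_of_false (not_boundary_of_interior hvi') (not_boundary_of_interior hvi)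
    by_cases h2 : u = w
    · subst h2
      exact iff_of_false (not_boundary_of_interior hwi') (not_boundary_of_interior hwi)
    unfold IsBoundary
    rw [hdo u h1 h2]
  have hT' : IsTreeWithBoundary G' := by
    refine ⟨isTree_of_degreeMultiset hT.1 (exch_connected hv hw hT.1.connected hr) hmult,
      ⟨v, hvi'⟩, ?_⟩
    obtain ⟨b, hb⟩ := hT.2.2
    exact ⟨b, (hbd b).2 hb⟩
  have hlam := hmin G' hT' hmult
  have hspec := (dirichletLambda_spec G' hT').1
  have hfb' : ∀ u, IsBoundary G' u → f u = 0 := fun u hu => hf.bdry u ((hbd u).1 hu)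
  have hsum : 0 < ∑ u, f u ^ 2 := Finset.sum_pos' (fun _ _ => sq_nonneg _)
    ⟨v, Finset.mem_univ v, pow_pos (hf.pos v hvi) 2⟩
  have hq' : quadForm G' f ≤ dirichletLambda G * ∑ u, f u ^ 2 := by
    rw [hG', exch_quadForm hv hw hvw, hf.quad]; linarith
  have hle : dirichletLambda G' ≤ dirichletLambda G :=
    le_of_mul_le_mul_right ((hspec f hfb').trans hq') hsum
  have heq : dirichletLambda G' = dirichletLambda G := le_antisymm hle hlam
  have hl := lap_eq_of_minimal G' hspec hfb' (by rw [heq]; exact hq') hvi'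
  rw [heq, ← hf.lap v hvi, hG', exch_lap_v hv hw] at hl
  linarith

end

/-! ### Rooted trees and monotonicity of the eigenfunction along branches -/

section
variable {V : Type*} [Fintype V]

/-- `par` is the parent map of the tree `G` rooted at `r` (with the convention `par r = r`): every
edge joins a non-root vertex to its parent, and parents are one step closer to the root. -/
structure Rooted (G : SimpleGraph V) (r : V) (par : V → V) : Prop where
  par_root : par r = r
  adj : ∀ v, v ≠ r → G.Adj v (par v)
  height : ∀ v, v ≠ r → G.dist r v = G.dist r (par v) + 1
  edge : ∀ u v, G.Adj u v → (u ≠ r ∧ par u = v) ∨ (v ≠ r ∧ par v = u)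

/-- Parent maps exist: the edges `{v, par v}` for `v ≠ r` are `|V| - 1` in number, hence all the
edges of the tree. -/
lemma exists_rooted {G : SimpleGraph V} (hG : G.IsTree) (r : V) : ∃ par, Rooted G r par := by
  have hex : ∀ v, v ≠ r → ∃ u, G.Adj v u ∧ G.dist r v = G.dist r u + 1 := by
    intro v hv
    obtain ⟨p, hp⟩ := hG.connected.exists_walk_length_eq_dist v r
    cases p with
    | nil => exact absurd rfl hv
    | @cons _ u _ h q =>
      refine ⟨u, h, ?_⟩
      rw [SimpleGraph.Walk.length_cons] at hp
      have h1 : G.dist u r ≤ q.length := SimpleGraph.dist_le q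
      have h2 : G.dist v r ≤ G.dist v u + G.dist u r := hG.connected.dist_triangle
      rw [SimpleGraph.dist_eq_one_iff_adj.2 h] at h2
      rw [G.dist_comm (u := r), G.dist_comm (u := r)]
      omega
  choose! p hp using hex
  set par : V → V := fun v => if v = r then r else p v with hpar
  have hpv : ∀ v, v ≠ r → par v = p v := fun v hv => by simp [hpar, hv]
  have hadj : ∀ v, v ≠ r → G.Adj v (par v) := fun v hv => by rw [hpv v hv]; exact (hp v hv).1
  have hht : ∀ v, v ≠ r → G.dist r v = G.dist r (par v) + 1 := fun v hv => by
    rw [hpv v hv]; exact (hp v hv).2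
  refine ⟨par, by simp [hpar], hadj, hht, fun u v huv => ?_⟩
  set S := (univ.erase r).image (fun v => s(v, par v)) with hS
  have hinj : Set.InjOn (fun v => s(v, par v)) (univ.erase r : Finset V) := by
    intro a ha b hb hab
    simp only [Finset.coe_erase, Finset.coe_univ, Set.mem_sdiff, Set.mem_univ,
      Set.mem_singleton_iff, true_and] at ha hb
    have h : s(a, par a) = s(b, par b) := hab
    rw [Sym2.eq_iff] at h
    rcases h with h | h
    · exact h.1
    · have h1 := hht a ha
      have h2 := hht b hb
      rw [h.2] at h1; rw [← h.1] at h2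
      omega
  have hsub : S ⊆ G.edgeFinset := by
    intro e he
    simp only [hS, Finset.mem_image, Finset.mem_erase, Finset.mem_univ, and_true] at he
    obtain ⟨a, ha, rfl⟩ := he
    simpa using hadj a ha
  have hcard : S.card + 1 = Fintype.card V := by
    rw [hS, Finset.card_image_of_injOn hinj, Finset.card_erase_of_mem (Finset.mem_univ r),
      Finset.card_univ]
    have : 0 < Fintype.card V := Fintype.card_pos_iff.2 ⟨r⟩
    omega
  have heq : S = G.edgeFinset := Finset.eq_of_subset_of_card_le hsub (by
    have := hG.card_edgeFinset
    omega)
  have he : s(u, v) ∈ S := by rw [heq]; simpa using huv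
  simp only [hS, Finset.mem_image, Finset.mem_erase, Finset.mem_univ, and_true] at he
  obtain ⟨a, ha, h⟩ := he
  rw [Sym2.eq_iff] at h
  rcases h with ⟨rfl, h⟩ | ⟨rfl, h⟩
  · exact Or.inl ⟨ha, h⟩
  · exact Or.inr ⟨ha, h⟩

namespace Rooted
variable {G : SimpleGraph V} {r : V} {par : V → V}

lemma height_par (R : Rooted G r par) (v : V) : G.dist r (par v) = G.dist r v - 1 := by
  by_cases h : v = r
  · subst h; rw [R.par_root]; simp
  · have := R.height v h; omega

lemma height_iter (R : Rooted G r par) (k : ℕ) (v : V) : G.dist r (par^[k] v) = G.dist r v - k := by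
  induction k with
  | zero => simp
  | succ k ih => rw [Function.iterate_succ_apply', R.height_par, ih]; omega

lemma eq_root (R : Rooted G r par) (v : V) (h : G.dist r v = 0) : v = r := by
  by_contra hv
  have := R.height v hv
  omega

lemma iter_root (R : Rooted G r par) (v : V) : par^[G.dist r v] v = r :=
  R.eq_root _ (by rw [R.height_iter]; omega)

lemma ne_root_of_height (_R : Rooted G r par) {v : V} (h : 0 < G.dist r v) : v ≠ r := by
  rintro rfl; simp at h

/-- Moving up from `v` by `k` steps is possible inside `G` minus `Z` if no vertex met lies in
`Z`. -/
lemma reach_up (R : Rooted G r par) {Z : Finset V} (v : V) (k : ℕ) (h : ∀ j ≤ k, par^[j] v ∉ Z) :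
    (avoid G Z).Reachable v (par^[k] v) := by
  induction k with
  | zero => exact SimpleGraph.Reachable.refl _
  | succ k ih =>
    refine (ih fun j hj => h j (by omega)).trans ?_
    have h1 := h k (by omega)
    have h2 := h (k + 1) le_rfl
    rw [Function.iterate_succ_apply'] at h2 ⊢
    by_cases hr : par^[k] v = r
    · rw [hr, R.par_root]
    · exact SimpleGraph.Adj.reachable (G := avoid G Z) ⟨R.adj _ hr, h1, h2⟩

/-- `u` is an ancestor of `v` (or `v` itself) in the rooted tree. -/
def _root_.FK.Anc (G : SimpleGraph V) (r : V) (par : V → V) (u v : V) : Prop :=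
  par^[G.dist r v - G.dist r u] v = u

lemma anc_iter (R : Rooted G r par) {k : ℕ} {v : V} (h : k ≤ G.dist r v) :
    Anc G r par (par^[k] v) v := by
  unfold Anc
  rw [R.height_iter]
  congr 2
  omega

lemma anc_height (R : Rooted G r par) {u v : V} (h : Anc G r par u v) : G.dist r u ≤ G.dist r v := by
  unfold Anc at h
  have := R.height_iter (G.dist r v - G.dist r u) v
  rw [h] at this
  omega

lemma anc_child (R : Rooted G r par) {u v : V} (h : Anc G r par u (par v)) : Anc G r par u v := by
  by_cases hv : v = r
  · subst hv; rwa [R.par_root] at h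
  have h1 := R.anc_height h
  have h2 := R.height v hv
  unfold Anc at *
  rw [show G.dist r v - G.dist r u = (G.dist r (par v) - G.dist r u) + 1 by omega,
    Function.iterate_succ_apply]
  exact h

/-- Two vertices are joined outside `Z` if `Z` meets the ancestors of neither of them. -/
lemma reach_pair (R : Rooted G r par) {Z : Finset V} {v w : V} (hv : ∀ z ∈ Z, ¬ Anc G r par z v)
    (hw : ∀ z ∈ Z, ¬ Anc G r par z w) : (avoid G Z).Reachable v w := by
  have h1 := R.reach_up (Z := Z) v (G.dist r v) (fun j hj hz => hv _ hz (R.anc_iter hj))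
  have h2 := R.reach_up (Z := Z) w (G.dist r w) (fun j hj hz => hw _ hz (R.anc_iter hj))
  rw [R.iter_root] at h1 h2
  exact h1.trans h2.symm

lemma adj_iff (R : Rooted G r par) {u v : V} :
    G.Adj u v ↔ (u ≠ r ∧ par u = v) ∨ (v ≠ r ∧ par v = u) := by
  refine ⟨R.edge u v, ?_⟩
  rintro (⟨h, rfl⟩ | ⟨h, rfl⟩)
  · exact R.adj u h
  · exact (R.adj v h).symm

/-- The finset of children of `v`. -/
def _root_.FK.children (r : V) (par : V → V) (v : V) : Finset V :=
  univ.filter fun x => x ≠ r ∧ par x = v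

lemma degree_ne_root (R : Rooted G r par) {v : V} (hv : v ≠ r) :
    G.degree v = (children r par v).card + 1 := by
  rw [← G.card_neighborFinset_eq_degree]
  have : G.neighborFinset v = insert (par v) (children r par v) := by
    ext x
    simp only [SimpleGraph.mem_neighborFinset, R.adj_iff, Finset.mem_insert, children,
      Finset.mem_filter, Finset.mem_univ, true_and, hv, ne_eq, not_false_eq_true]
    exact or_congr eq_comm Iff.rfl
  rw [this, Finset.card_insert_of_notMem]
  simp only [children, Finset.mem_filter, Finset.mem_univ, true_and]
  rintro ⟨h1, h2⟩
  have h3 := R.height _ h1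
  have h4 := R.height _ hv
  rw [h2] at h3
  omega

lemma degree_root (R : Rooted G r par) : G.degree r = (children r par r).card := by
  rw [← G.card_neighborFinset_eq_degree]
  congr 1
  ext x
  simp [SimpleGraph.mem_neighborFinset, R.adj_iff, children]

end Rooted

/-- A minimizing tree `G` with a positive first eigenfunction `f`, rooted at a maximum `r`
of `f`. -/
structure Ctx (G : SimpleGraph V) (f : V → ℝ) (r : V) (par : V → V) : Prop where
  tree : IsTreeWithBoundary G
  min : IsMin G
  perron : IsPerron G f
  rooted : Rooted G r par
  top : ∀ v, f v ≤ f r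

namespace Ctx
variable {G : SimpleGraph V} {f : V → ℝ} {r : V} {par : V → V}

lemma nonneg (C : Ctx G f r par) (v : V) : 0 ≤ f v := by
  rcases boundary_or_interior C.tree v with h | h
  · exact (C.perron.bdry v h).ge
  · exact (C.perron.pos v h).le

lemma interior_of_pos (C : Ctx G f r par) {v : V} (h : 0 < f v) : IsInterior G v := by
  rcases boundary_or_interior C.tree v with hb | hi
  · exact absurd (C.perron.bdry v hb) h.ne'
  · exact hi

lemma root_interior (C : Ctx G f r par) : IsInterior G r := by
  obtain ⟨u, hu⟩ := C.tree.2.1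
  exact C.interior_of_pos ((C.perron.pos u hu).trans_le (C.top u))

lemma par_interior (C : Ctx G f r par) {x : V} (hx : x ≠ r) : IsInterior G (par x) := by
  by_cases h : par x = r
  · rw [h]; exact C.root_interior
  · unfold IsInterior
    rw [C.rooted.degree_ne_root h]
    have : 0 < (children r par (par x)).card := Finset.card_pos.2 ⟨x, by simp [children, hx]⟩
    omega

lemma exists_child (C : Ctx G f r par) {v : V} (hv : IsInterior G v) : ∃ x, x ≠ r ∧ par x = v := by
  have : 0 < (children r par v).card := by
    unfold IsInterior at hv
    by_cases h : v = r
    · subst h; rw [C.rooted.degree_root] at hv; omega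
    · rw [C.rooted.degree_ne_root h] at hv; omega
  obtain ⟨x, hx⟩ := Finset.card_pos.1 this
  exact ⟨x, by simpa [children] using hx⟩

/-- The switching principle: along a path `x, y, …, a, b`, if the end value at `x` exceeds that at
`b`, then the inner value at `y` exceeds that at `a`. -/
lemma switch (C : Ctx G f r par) {x y a b : V} (hxy : G.Adj x y) (hab : G.Adj a b)
    (hxa : ¬ G.Adj x a)
    (hyb : ¬ G.Adj y b) (hya : y ≠ a)
    (hr : (avoid G {x, b}).Reachable y a) (hy : IsInterior G y) (ha : IsInterior G a)
    (hlt : f b < f x) : f a < f y := by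
  by_contra hcon
  push Not at hcon
  have hxb : x ≠ b := by rintro rfl; exact hxa hab.symm
  have s1 : sgn G y a x = 1 := by
    simp [sgn, hxy.symm, G.adj_comm a x, hxa]
  have s2 : sgn G y a b = -1 := by simp [sgn, hab, hyb]
  have h := exchange C.tree C.min C.perron hya hr hy ha
    (Or.inl (by rw [Finset.sum_pair hxb, s1, s2]; ring))
    (by
      rw [Finset.sum_pair hxb, s1, s2]
      nlinarith)
  rw [Finset.sum_pair hxb, s1, s2] at h
  linarith

/-- The eigenfunction does not increase from parent to child. -/
lemma le_par (C : Ctx G f r par) (w : V) : f w ≤ f (par w) := by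
  have R := C.rooted
  by_contra hcon
  push Not at hcon
  have hw0 : 0 < f w := (C.nonneg _).trans_lt hcon
  -- the last ancestor below the level `f w`
  have hex : ∃ i, f w ≤ f (par^[i + 2] w) := by
    refine ⟨G.dist r w, ?_⟩
    have : par^[G.dist r w + 2] w = r :=
      R.eq_root _ (by rw [R.height_iter]; omega)
    rw [this]; exact C.top w
  set i := Nat.find hex with hi
  have hi1 : f w ≤ f (par^[i + 2] w) := Nat.find_spec hex
  have hi2 : f (par^[i + 1] w) < f w := by
    rcases Nat.eq_zero_or_pos i with h0 | h0
    · rw [h0]; simpa using hcon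
    · have := Nat.find_min hex (m := i - 1) (by omega)
      push Not at this
      rwa [show i - 1 + 2 = i + 1 by omega] at this
  set y := par^[i + 1] w with hy
  have hpy : par^[i + 2] w = par y := Function.iterate_succ_apply' _ _ _
  rw [hpy] at hi1
  have hyr : y ≠ r := by
    intro h
    have := C.top w
    rw [← h] at this; linarith
  -- a deepest descendant of `w` above the level `f w`
  obtain ⟨a, ha, hamax⟩ := Finset.exists_max_image
    (univ.filter fun u => Anc G r par w u ∧ f w ≤ f u) (fun u => G.dist r u)
    ⟨w, Finset.mem_filter.2 ⟨Finset.mem_univ _, by simp [Anc], le_rfl⟩⟩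
  simp only [Finset.mem_filter, Finset.mem_univ, true_and] at ha hamax
  obtain ⟨haw, haf⟩ := ha
  have hai : IsInterior G a := C.interior_of_pos (hw0.trans_le haf)
  obtain ⟨b, hbr, hba⟩ := C.exists_child hai
  have hbh := R.height b hbr
  rw [hba] at hbh
  have hbf : f b < f w := by
    by_contra h
    push Not at h
    have := hamax b ⟨R.anc_child (by rw [hba]; exact haw), h⟩
    omega
  have hwh := R.anc_height haw
  have hyh : G.dist r y = G.dist r w - (i + 1) := R.height_iter _ _
  have hy0 : 0 < G.dist r y := Nat.pos_of_ne_zero fun h => hyr (R.eq_root _ h)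
  have hxh := R.height y hyr
  have hreach : (avoid G {par y, b}).Reachable y a := by
    have := R.reach_up (Z := {par y, b}) a ((i + 1) + (G.dist r a - G.dist r w)) (by
      intro j hj hz
      have hjh := R.height_iter j a
      simp only [Finset.mem_insert, Finset.mem_singleton] at hz
      rcases hz with h | h <;> rw [h] at hjh <;> omega)
    rw [Function.iterate_add_apply] at this
    unfold Anc at haw
    rw [haw] at this
    exact this.symm
  have hyi : IsInterior G y := by
    rw [hy, Function.iterate_succ_apply']
    apply C.par_interior
    intro h
    rw [Function.iterate_succ_apply', h, R.par_root] at hy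
    exact hyr hy
  have key := C.switch (x := par y) (y := y) (a := a) (b := b) (R.adj y hyr).symm
    (by rw [← hba]; exact (R.adj b hbr).symm)
    (by
      intro h
      rcases R.edge _ _ h with ⟨h1, h2⟩ | ⟨h1, h2⟩
      · have := R.height _ h1
        rw [h2] at this; omega
      · have := R.height _ h1
        rw [h2] at this; omega)
    (by
      intro h
      rcases R.edge _ _ h with ⟨h1, h2⟩ | ⟨h1, h2⟩
      · have := R.height _ h1
        rw [h2] at this; omega
      · have := R.height _ h1
        rw [h2] at this; omega)
    (by intro h; have := congrArg (G.dist r) h; omega)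
    hreach hyi hai (hbf.trans_le hi1)
  linarith

lemma le_iter (C : Ctx G f r par) (k : ℕ) (w : V) : f w ≤ f (par^[k] w) := by
  induction k with
  | zero => simp
  | succ k ih => rw [Function.iterate_succ_apply']; exact ih.trans (C.le_par _)

lemma le_anc (C : Ctx G f r par) {u v : V} (h : Anc G r par u v) : f v ≤ f u := by
  have := C.le_iter (G.dist r v - G.dist r u) v
  unfold Anc at h
  rwa [h] at this

/-- Children of different parents are ordered like their parents, unless one child is an ancestor
of the other parent. -/
lemma children_le (C : Ctx G f r par) {w₁ w₂ : V} (h1 : w₁ ≠ r) (h2 : w₂ ≠ r)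
    (hne : par w₁ ≠ par w₂)
    (ha : ¬ Anc G r par w₁ (par w₂)) (hb : ¬ Anc G r par w₂ (par w₁))
    (hle : f (par w₂) ≤ f (par w₁)) : f w₂ ≤ f w₁ := by
  have R := C.rooted
  by_contra hcon
  push Not at hcon
  have self : ∀ w, w ≠ r → ¬ Anc G r par w (par w) := fun w hw h => by
    have h3 := R.anc_height h
    have := R.height w hw
    omega
  have nadj : ∀ u w, u ≠ r → par w ≠ par u → ¬ Anc G r par u (par w) → ¬ G.Adj u (par w) := by
    intro u w hu hn hA h
    rcases R.edge _ _ h with ⟨-, h4⟩ | ⟨h3, h4⟩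
    · exact hn h4.symm
    · apply hA
      have := R.height _ h3
      unfold Anc
      rw [this, h4]
      simp [h4]
  have key := C.switch (x := w₂) (y := par w₂) (a := par w₁) (b := w₁) (R.adj w₂ h2)
    (R.adj w₁ h1).symm (nadj _ _ h2 hne hb) (fun h => nadj _ _ h1 hne.symm ha h.symm) hne.symm
    (R.reach_pair
      (by
        intro z hz
        simp only [Finset.mem_insert, Finset.mem_singleton] at hz
        rcases hz with rfl | rfl
        · exact self _ h2
        · exact ha)
      (by
        intro z hz
        simp only [Finset.mem_insert, Finset.mem_singleton] at hz
        rcases hz with rfl | rfl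
        · exact hb
        · exact self _ h1))
    (C.par_interior h2) (C.par_interior h1) hcon
  linarith

lemma le_of_height_lt (C : Ctx G f r par) :
    ∀ (k : ℕ) (v w : V), G.dist r v = k → G.dist r v < G.dist r w → f w ≤ f v := by
  have R := C.rooted
  intro k
  induction k with
  | zero =>
    intro v w hv _
    rw [R.eq_root v hv]; exact C.top w
  | succ k ih =>
    intro v w hv hvw
    have hvr : v ≠ r := R.ne_root_of_height (by omega)
    have hwr : w ≠ r := R.ne_root_of_height (by omega)
    have h1 := R.height v hvr
    have h2 := R.height w hwr
    have hpar := ih (par v) (par w) (by omega) (by omega)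
    by_cases hA : Anc G r par v (par w)
    · exact (C.le_par w).trans (C.le_anc hA)
    · refine C.children_le hvr hwr (fun h => ?_) hA (fun h => ?_) hpar
      · rw [h] at h1; omega
      · have := R.anc_height h; omega

lemma children_le_of_height_eq (C : Ctx G f r par) {w₁ w₂ : V} (h1 : w₁ ≠ r) (h2 : w₂ ≠ r)
    (hne : par w₁ ≠ par w₂)
    (hh : G.dist r w₁ = G.dist r w₂) (hle : f (par w₂) ≤ f (par w₁)) : f w₂ ≤ f w₁ := by
  have R := C.rooted
  have e1 := R.height _ h1
  have e2 := R.height _ h2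
  refine C.children_le h1 h2 hne (fun h => ?_) (fun h => ?_) hle <;>
  · have := R.anc_height h; omega

end Ctx

end

/-! ### The spiral order of a minimizing tree -/

section
variable {V : Type*} [Fintype V]

/-- An enumeration of the vertices by decreasing values of `f`. -/
lemma exists_key (f : V → ℝ) : ∃ key : V → ℕ, Function.Injective key ∧
    (∀ v, key v < Fintype.card V) ∧ ∀ v w, key v ≤ key w → f w ≤ f v := by
  set e := Fintype.equivFin V
  set g : Fin (Fintype.card V) → ℝ := fun i => - f (e.symm i) with hg
  set σ := Tuple.sort g
  have hm : Monotone (g ∘ σ) := Tuple.monotone_sort g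
  refine ⟨fun v => (σ.symm (e v)).val, ?_, fun v => (σ.symm (e v)).isLt, ?_⟩
  · intro v w h
    exact e.injective (σ.symm.injective (Fin.val_injective h))
  · intro v w h
    have := hm (a := σ.symm (e v)) (b := σ.symm (e w)) h
    simp only [hg, Function.comp, Equiv.apply_symm_apply, Equiv.symm_apply_apply] at this
    linarith

/-- The number whose base-`n` digits are a leading `1` followed by the keys of the last `k`
ancestors-or-self of a vertex, the farthest one first. -/
def spiralAux (n : ℕ) (par : V → V) (key : V → ℕ) : ℕ → V → ℕ
  | 0, _ => 1
  | k + 1, v => n * spiralAux n par key k (par v) + key v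

/-- The spiral index of a vertex: comparing indices compares heights first, and vertices of equal
height lexicographically by the keys on their paths from the root. -/
def spiralIdx (G : SimpleGraph V) (r : V) (par : V → V) (key : V → ℕ) (v : V) : ℕ :=
  spiralAux (Fintype.card V) par key (G.dist r v) v

section order
variable {G : SimpleGraph V} {r : V} {par : V → V} {key : V → ℕ}

lemma spiralIdx_root : spiralIdx G r par key r = 1 := by simp [spiralIdx, spiralAux]

lemma spiralIdx_step (R : Rooted G r par) {v : V} (hv : v ≠ r) :
    spiralIdx G r par key v = Fintype.card V * spiralIdx G r par key (par v) + key v := by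
  unfold spiralIdx
  rw [R.height v hv]; rfl

lemma spiralAux_bounds {n : ℕ} (hk : ∀ v, key v < n) (k : ℕ) (v : V) :
    n ^ k ≤ spiralAux n par key k v ∧ spiralAux n par key k v + 1 ≤ 2 * n ^ k := by
  induction k generalizing v with
  | zero => simp [spiralAux]
  | succ k ih =>
    obtain ⟨h1, h2⟩ := ih (par v)
    have := hk v
    simp only [spiralAux, pow_succ]
    constructor
    · nlinarith
    · nlinarith

lemma height_le_of_spiralIdx_le (hn : 2 ≤ Fintype.card V) (hk : ∀ v, key v < Fintype.card V)
    {v w : V} (h : spiralIdx G r par key v ≤ spiralIdx G r par key w) :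
    G.dist r v ≤ G.dist r w := by
  by_contra hcon
  push Not at hcon
  have h1 := (spiralAux_bounds (par := par) hk (G.dist r v) v).1
  have h2 := (spiralAux_bounds (par := par) hk (G.dist r w) w).2
  have h3 : Fintype.card V ^ (G.dist r w + 1) ≤ Fintype.card V ^ (G.dist r v) :=
    Nat.pow_le_pow_right (by omega) hcon
  unfold spiralIdx at h
  rw [pow_succ] at h3
  nlinarith [Nat.pow_le_pow_left hn 0]

lemma spiralIdx_injective (R : Rooted G r par) (hn : 2 ≤ Fintype.card V)
    (hk : ∀ v, key v < Fintype.card V) (hki : Function.Injective key) :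
    Function.Injective (spiralIdx G r par key) := by
  intro v w h
  have hh : G.dist r v = G.dist r w :=
    le_antisymm (height_le_of_spiralIdx_le hn hk h.le) (height_le_of_spiralIdx_le hn hk h.ge)
  by_cases hv : v = r
  · subst hv
    rw [SimpleGraph.dist_self] at hh
    exact (R.eq_root _ hh.symm).symm
  · have hw : w ≠ r := by
      rintro rfl
      rw [SimpleGraph.dist_self] at hh
      exact hv (R.eq_root _ hh)
    rw [spiralIdx_step R hv, spiralIdx_step R hw] at h
    have := congrArg (· % Fintype.card V) h
    simp only [Nat.mul_add_mod] at this
    rw [Nat.mod_eq_of_lt (hk v), Nat.mod_eq_of_lt (hk w)] at this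
    exact hki this

lemma spiralIdx_children (R : Rooted G r par) (hk : ∀ v, key v < Fintype.card V) {v w : V}
    (hv : v ≠ r) (hw : w ≠ r)
    (h : spiralIdx G r par key (par v) < spiralIdx G r par key (par w)) :
    spiralIdx G r par key v < spiralIdx G r par key w := by
  rw [spiralIdx_step R hv, spiralIdx_step R hw]
  have := hk v
  nlinarith

lemma isChild_iff (R : Rooted G r par) {v w : V} : IsChild G r v w ↔ w ≠ r ∧ par w = v := by
  constructor
  · rintro ⟨h1, h2⟩
    rcases R.edge _ _ h1 with ⟨h3, h4⟩ | h3
    · have := R.height _ h3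
      rw [h4] at this; omega
    · exact h3
  · rintro ⟨h1, rfl⟩
    exact ⟨(R.adj w h1).symm, R.height w h1⟩

/-- Along the spiral order the eigenfunction of a minimizing tree does not increase. -/
lemma Ctx.spiral_anti {f : V → ℝ} (C : Ctx G f r par) (hn : 2 ≤ Fintype.card V)
    (hk : ∀ v, key v < Fintype.card V) (hkf : ∀ v w, key v ≤ key w → f w ≤ f v) :
    ∀ (k : ℕ) (v w : V), G.dist r v = k →
      spiralIdx G r par key v ≤ spiralIdx G r par key w → f w ≤ f v := by
  have R := C.rooted
  intro k
  induction k with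
  | zero =>
    intro v w hv _
    rw [R.eq_root v hv]; exact C.top w
  | succ k ih =>
    intro v w hv hle
    have hh := height_le_of_spiralIdx_le hn hk hle
    rcases hh.lt_or_eq with h | h
    · exact C.le_of_height_lt _ v w rfl h
    have hvr : v ≠ r := R.ne_root_of_height (by omega)
    have hwr : w ≠ r := R.ne_root_of_height (by omega)
    have h1 := R.height v hvr
    by_cases hp : par v = par w
    · rw [spiralIdx_step R hvr, spiralIdx_step R hwr, hp] at hle
      exact hkf _ _ (by omega)
    · refine C.children_le_of_height_eq hvr hwr hp h (ih _ _ (by omega) ?_)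
      by_contra hcon
      push Not at hcon
      exact absurd (spiralIdx_children R hk hwr hvr hcon) (by omega)

end order

/-- Interior degrees do not decrease along a numbering `N` of the vertices of a
minimizing tree along which the eigenfunction does not increase and children follow their
parents. For a closest pair violating this, the surplus branches of the first vertex are moved to
the second one. -/
lemma Ctx.degree_mono {G : SimpleGraph V} {f : V → ℝ} {r : V} {par : V → V}
    (C : Ctx G f r par) {N : V → ℕ}
    (hNf : ∀ v w, N v ≤ N w → f w ≤ f v) (hNp : ∀ v, v ≠ r → N (par v) < N v) :
    ∀ (k : ℕ) (v w : V), N w = N v + k → 0 < k → IsInterior G v → IsInterior G w →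
      G.degree v ≤ G.degree w := by
  have R := C.rooted
  intro k
  induction k using Nat.strong_induction_on with
  | _ k ih =>
  intro v w hk hk0 hvi hwi
  by_contra hdeg
  push Not at hdeg
  have hvw : v ≠ w := by rintro rfl; omega
  have hnone : ∀ x, IsInterior G x → N v < N x → N w ≤ N x := by
    intro x hx h1
    by_contra h2
    push Not at h2
    have a := ih (N x - N v) (by omega) v x (by omega) (by omega) hvi hx
    have b := ih (N w - N x) (by omega) x w (by omega) (by omega) hx hwi
    omega
  have hle : f w ≤ f v := hNf _ _ (by omega)
  have hch : ∀ x ∈ children r par v, f x ≤ f w := by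
    intro x hx
    simp only [children, Finset.mem_filter, Finset.mem_univ, true_and] at hx
    rcases boundary_or_interior C.tree x with hb | hi
    · rw [C.perron.bdry x hb]; exact C.nonneg w
    · refine hNf _ _ (hnone x hi ?_)
      rw [← hx.2]; exact hNp x hx.1
  -- the children of `v` whose branch does not contain `w`
  set B := (children r par v).filter fun x => ¬ Anc G r par x w with hB
  have hBcard : (children r par v).card ≤ B.card + 1 := by
    have h1 : ((children r par v).filter fun x => Anc G r par x w).card + B.card
        = (children r par v).card := by
      rw [hB]
      convert Finset.card_filter_add_card_filter_not (s := children r par v)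
        (fun x => Anc G r par x w)
    have h2 : ((children r par v).filter fun x => Anc G r par x w).card ≤ 1 := by
      rw [Finset.card_le_one]
      intro a ha b hb
      simp only [children, Finset.mem_filter, Finset.mem_univ, true_and] at ha hb
      have e1 := R.height a ha.1.1
      have e2 := R.height b hb.1.1
      rw [ha.1.2] at e1
      rw [hb.1.2, ← e1] at e2
      have e3 := ha.2
      have e4 := hb.2
      unfold Anc at e3 e4
      rw [e2] at e4
      exact e3.symm.trans e4
    omega
  have hcc : G.degree v - G.degree w ≤ B.card := by
    unfold IsInterior at hwi
    by_cases h : v = r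
    · have := R.degree_root
      rw [h] at hBcard ⊢
      omega
    · have := R.degree_ne_root h
      omega
  -- a child of `v` with a smaller value, which exists since the Laplacian is positive at `v`
  obtain ⟨u, hu, huf⟩ : ∃ u ∈ children r par v, f u < f v := by
    by_contra hcon
    push Not at hcon
    have hall : ∀ x ∈ G.neighborFinset v, f v ≤ f x := by
      intro x hx
      rw [SimpleGraph.mem_neighborFinset] at hx
      rcases R.edge _ _ hx with ⟨-, h⟩ | h
      · rw [← h]; exact C.le_par v
      · exact hcon x (by simpa [children] using h)
    have h1 := C.perron.lap v hvi
    have h2 : 0 < dirichletLambda G * f v :=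
      mul_pos (exists_perron G C.tree).1 (C.perron.pos v hvi)
    have h3 := Finset.card_nsmul_le_sum _ _ _ hall
    rw [SimpleGraph.card_neighborFinset_eq_degree, nsmul_eq_mul] at h3
    unfold lapApply at h1
    linarith
  have huB : f v = f w → u ∈ B := by
    intro h
    rw [hB, Finset.mem_filter]
    refine ⟨hu, fun hA => ?_⟩
    have := C.le_anc hA
    linarith
  obtain ⟨Z, hZ1, hZ2, hZ3⟩ := Finset.exists_subsuperset_card_eq
    (Finset.filter_subset (fun x => x = u) B) (n := G.degree v - G.degree w)
    (by
      refine le_trans (Finset.card_le_one.2 ?_) (show 1 ≤ _ by omega)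
      intro a ha b hb
      rw [Finset.mem_filter] at ha hb
      exact ha.2.trans hb.2.symm) hcc
  have hZB : ∀ z ∈ Z, (z ≠ r ∧ par z = v) ∧ ¬ Anc G r par z w := by
    intro z hz
    have := hZ2 hz
    simpa [hB, children] using this
  have hsgn : ∀ z ∈ Z, sgn G v w z = 1 := by
    intro z hz
    obtain ⟨⟨h1, h2⟩, h3⟩ := hZB z hz
    have a1 : G.Adj v z := by rw [← h2]; exact (R.adj z h1).symm
    have a2 : ¬ G.Adj w z := by
      intro h
      rcases R.edge _ _ h with ⟨h4, h5⟩ | ⟨-, h5⟩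
      · apply h3
        rw [← h5]
        have := R.height _ h4
        exact R.anc_iter (k := 1) (by omega)
      · exact hvw (h2.symm.trans h5)
    simp [sgn, a1, a2]
  have hsum : ∀ F : V → ℝ, ∑ z ∈ Z, sgn G v w z * F z = ∑ z ∈ Z, F z := fun F =>
    Finset.sum_congr rfl fun z hz => by rw [hsgn z hz, one_mul]
  have hfz : ∀ z ∈ Z, f z ≤ f w := fun z hz => hch z (by
    have := (hZB z hz).1
    simpa [children] using this)
  have key := exchange C.tree C.min C.perron hvw
    (R.reach_pair (Z := Z)
      (fun z hz hA => by
        have h1 := R.anc_height hA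
        obtain ⟨⟨h2, h3⟩, -⟩ := hZB z hz
        have := R.height _ h2
        rw [h3] at this
        omega)
      (fun z hz => (hZB z hz).2)) hvi hwi
    (Or.inr (by
      rw [Finset.sum_congr rfl hsgn, Finset.sum_const, hZ3, nsmul_eq_mul, mul_one,
        Nat.cast_sub hdeg.le]))
    (by
      rw [hsum]
      refine mul_nonpos_of_nonpos_of_nonneg (by linarith) (Finset.sum_nonneg fun z hz => ?_)
      have := hfz z hz
      linarith)
  rw [hsum] at key
  have hnn : ∀ z ∈ Z, 0 ≤ f v - f z := fun z hz => by
    have := hfz z hz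
    linarith
  have hall := (Finset.sum_eq_zero_iff_of_nonneg hnn).1 key
  rcases hle.lt_or_eq with hlt | heq
  · obtain ⟨z, hz⟩ : Z.Nonempty := Finset.card_pos.1 (by omega)
    have := hall z hz
    have := hfz z hz
    linarith
  · have := hall u (hZ1 (Finset.mem_filter.2 ⟨huB heq.symm, rfl⟩))
    linarith

/-- A tree minimizing the first Dirichlet eigenvalue for its degree sequence is an SLO*-tree. -/
lemma isSLOStarTree_of_isMin {G : SimpleGraph V} (hT : IsTreeWithBoundary G) (hmin : IsMin G) :
    IsSLOStarTree G := by
  obtain ⟨-, f, hf1, hf2, hf3, hf4⟩ := exists_perron G hT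
  obtain ⟨r, -, hr⟩ := Finset.exists_max_image univ f ⟨hT.2.1.choose, Finset.mem_univ _⟩
  obtain ⟨par, R⟩ := exists_rooted hT.1 r
  have C : Ctx G f r par := ⟨hT, hmin, ⟨hf1, hf2, hf3, hf4⟩, R, fun v => hr v (Finset.mem_univ v)⟩
  obtain ⟨key, hki, hk, hkf⟩ := exists_key f
  have hn : 2 ≤ Fintype.card V := by
    have h := C.root_interior
    unfold IsInterior at h
    have := G.degree_lt_card_verts r
    omega
  set N := spiralIdx G r par key with hN
  have hNi : Function.Injective N := spiralIdx_injective R hn hk hki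
  have hNf : ∀ v w, N v ≤ N w → f w ≤ f v := fun v w h => C.spiral_anti hn hk hkf _ v w rfl h
  have hNp : ∀ v, v ≠ r → N (par v) < N v := by
    intro v hv
    by_contra h
    push Not at h
    have h1 := height_le_of_spiralIdx_le hn hk h
    have h2 := R.height v hv
    omega
  refine ⟨hT, r, fun v w => N v < N w, ⟨?_, ?_, ?_, ?_⟩, ?_⟩
  · exact
      { irrefl := fun a => lt_irrefl _
        trans := fun a b c => lt_trans
        trichotomous := fun a b h1 h2 => hNi (by omega) }
  · exact fun v w h => height_le_of_spiralIdx_le hn hk h.le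
  · intro v₁ v₂ w₁ w₂ h h1 h2
    rw [isChild_iff R] at h1 h2
    obtain ⟨h1, rfl⟩ := h1
    obtain ⟨h2, rfl⟩ := h2
    exact spiralIdx_children R hk h1 h2 h
  · intro v w h hb
    rcases boundary_or_interior hT w with h1 | h1
    · exact h1
    · have h2 := hNf v w h.le
      rw [hf1 v hb] at h2
      exact absurd (hf2 w h1) (by linarith)
  · intro v w h hv hw
    exact C.degree_mono hNf hNp (N w - N v) v w (by omega) (by omega) hv hw

end

/-! ### SLO*-trees are determined by their degree sequence -/

section
lemma eq_of_monotone_of_map_eq {α : Type*} [LinearOrder α] {n : ℕ} {f g : Fin n → α}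
    (hf : Monotone f) (hg : Monotone g)
    (h : (univ : Finset (Fin n)).val.map f = (univ : Finset (Fin n)).val.map g) : f = g := by
  rw [Fin.univ_val_map, Fin.univ_val_map, Multiset.coe_eq_coe] at h
  exact List.ofFn_injective (h.eq_of_sortedLE hf.sortedLE_ofFn hg.sortedLE_ofFn)

lemma exists_rank {V : Type*} [Fintype V] {lt : V → V → Prop} (h : IsStrictTotalOrder V lt)
    {n : ℕ} (hn : Fintype.card V = n) : ∃ e : V ≃ Fin n, ∀ u v, e u < e v ↔ lt u v := by
  let L : LinearOrder V := linearOrderOfSTO lt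
  have o := Fintype.orderIsoFinOfCardEq V hn
  exact ⟨o.symm.toEquiv, fun u v => o.symm.lt_iff_lt⟩

/-- Degrees in the order in which they occur along an SLO*-ordering: the interior degrees
increase, and the degree `1` of the boundary comes last. -/
def degKey (d : ℕ) : WithTop ℕ := if d = 1 then ⊤ else d

lemma degKey_injective : Function.Injective degKey := by
  intro a b h
  unfold degKey at h
  split_ifs at h with h1 h2 h2
  · rw [h1, h2]
  · exact absurd h.symm (WithTop.coe_ne_top)
  · exact absurd h (WithTop.coe_ne_top)
  · exact_mod_cast h

/-- An SLO*-ordering turned into an enumeration of the vertices: the root comes first, and both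
the degree key and the position of the parent are monotone. -/
lemma exists_enumeration {n : ℕ} {G : SimpleGraph (Fin n)} (hG : IsSLOStarTree G) :
    ∃ (e : Fin n ≃ Fin n) (r : Fin n) (par : Fin n → Fin n), Rooted G r par ∧ (∀ i, e r ≤ i) ∧
      Monotone (fun i => degKey (G.degree (e.symm i))) ∧
      Monotone (fun i => e (par (e.symm i))) := by
  obtain ⟨hT, r, lt, ⟨hst, S1, S2, S3⟩, S4⟩ := hG
  obtain ⟨par, R⟩ := exists_rooted hT.1 r
  obtain ⟨e, he⟩ := exists_rank hst (Fintype.card_fin n)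
  have hmin : ∀ i, e r ≤ i := by
    intro i
    by_contra h
    push Not at h
    rw [← e.apply_symm_apply i, he] at h
    have h1 := S1 _ _ h
    rw [SimpleGraph.dist_self] at h1
    have h2 := R.eq_root _ (Nat.le_zero.1 h1)
    rw [h2] at h
    exact hst.irrefl _ h
  refine ⟨e, r, par, R, hmin, ?_, ?_⟩
  · intro i j hij
    rcases hij.lt_or_eq with h | rfl
    swap
    · exact le_rfl
    rw [← e.apply_symm_apply i, ← e.apply_symm_apply j, he] at h
    simp only
    rcases boundary_or_interior hT (e.symm j) with hj | hj
    · have : degKey (G.degree (e.symm j)) = ⊤ := if_pos hj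
      rw [this]; exact le_top
    · rcases boundary_or_interior hT (e.symm i) with hi | hi
      · exact absurd (S3 _ _ h hi) (not_boundary_of_interior hj)
      · have h1 := S4 _ _ h hi hj
        unfold IsInterior at hi hj
        unfold degKey
        rw [if_neg (by omega), if_neg (by omega)]
        exact_mod_cast h1
  · intro i j hij
    simp only
    by_contra h
    push Not at h
    by_cases hi : e.symm i = r
    · rw [hi, R.par_root] at h
      exact absurd (hmin (e (par (e.symm j)))) (not_le.2 h)
    by_cases hj : e.symm j = r
    · have h1 : i = j := le_antisymm hij (by
        rw [← e.apply_symm_apply j, hj]; exact hmin i)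
      rw [h1] at h
      exact lt_irrefl _ h
    rw [he] at h
    have h1 := S2 _ _ _ _ h ((isChild_iff R).2 ⟨hj, rfl⟩) ((isChild_iff R).2 ⟨hi, rfl⟩)
    rw [← he, e.apply_symm_apply, e.apply_symm_apply] at h1
    exact absurd hij (not_le.2 h1)

/-- The number of vertices with parent `v`; the root counts as its own parent. -/
lemma card_par_eq {V : Type*} [Fintype V] {G : SimpleGraph V} {r : V} {par : V → V}
    (R : Rooted G r par) (v : V) :
    (univ.filter fun x => par x = v).card = if v = r then G.degree v + 1 else G.degree v - 1 := by
  split_ifs with h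
  · subst h
    rw [R.degree_root]
    have : (univ.filter fun x => par x = v) = insert v (children v par v) := by
      ext x
      by_cases hx : x = v
      · subst hx; simp [R.par_root]
      · simp [children, hx]
    rw [this, Finset.card_insert_of_notMem (by simp [children])]
  · rw [R.degree_ne_root h, Nat.add_sub_cancel]
    congr 1
    ext x
    simp only [children, Finset.mem_filter, Finset.mem_univ, true_and]
    constructor
    · rintro rfl
      refine ⟨?_, rfl⟩
      rintro rfl
      exact h R.par_root
    · exact fun h => h.2

/-- SLO*-trees with the same degree sequence are isomorphic: along the enumerations, the degree
sequence determines the degrees, and the degrees determine the parents. -/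
lemma iso_of_isSLOStarTree {n : ℕ} {G G' : SimpleGraph (Fin n)} (hG : IsSLOStarTree G)
    (hG' : IsSLOStarTree G') (hdeg : degreeMultiset G = degreeMultiset G') :
    Nonempty (G ≃g G') := by
  obtain ⟨e, r, par, R, hr, hd, hp⟩ := exists_enumeration hG
  obtain ⟨e', r', par', R', hr', hd', hp'⟩ := exists_enumeration hG'
  have hrr : e r = e' r' := le_antisymm (hr _) (hr' _)
  have hmap : ∀ (H : SimpleGraph (Fin n)) (σ : Fin n ≃ Fin n),
      (univ : Finset (Fin n)).val.map (fun i => degKey (H.degree (σ.symm i)))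
        = (degreeMultiset H).map degKey := by
    intro H σ
    unfold degreeMultiset
    rw [Multiset.map_map]
    have : (univ : Finset (Fin n)).val.map σ.symm = (univ : Finset (Fin n)).val :=
      Multiset.map_univ_val_equiv σ.symm
    conv_rhs => rw [← this, Multiset.map_map]
    rfl
  have hδ : ∀ i, G.degree (e.symm i) = G'.degree (e'.symm i) := by
    have := eq_of_monotone_of_map_eq hd hd' (by rw [hmap, hmap, hdeg])
    exact fun i => degKey_injective (congrFun this i)
  have hcount : ∀ (H : SimpleGraph (Fin n)) (σ : Fin n ≃ Fin n) (s : Fin n) (q : Fin n → Fin n),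
      Rooted H s q → ∀ j, Multiset.count j
        ((univ : Finset (Fin n)).val.map (fun i => σ (q (σ.symm i))))
          = if j = σ s then H.degree (σ.symm j) + 1 else H.degree (σ.symm j) - 1 := by
    intro H σ s q hR j
    have h1 := card_par_eq hR (σ.symm j)
    rw [Multiset.count_map, ← Finset.filter_val, Finset.card_val]
    simp only [Equiv.symm_apply_eq] at h1
    rw [← h1]
    refine Finset.card_equiv σ.symm fun i => ?_
    simp only [Finset.mem_filter, Finset.mem_univ, true_and]
    rw [Equiv.eq_symm_apply, eq_comm]
  have hq : ∀ i, e (par (e.symm i)) = e' (par' (e'.symm i)) := by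
    have := eq_of_monotone_of_map_eq hp hp' (by
      ext j
      rw [hcount G e r par R, hcount G' e' r' par' R', hrr, hδ])
    exact fun i => congrFun this i
  set φ := e.trans e'.symm with hφ
  have hφr : φ r = r' := by simp [hφ, hrr]
  have hφp : ∀ x, φ (par x) = par' (φ x) := by
    intro x
    have := hq (e x)
    rw [e.symm_apply_apply] at this
    simp [hφ, this]
  refine ⟨⟨φ, fun {u v} => ?_⟩⟩
  have hne : ∀ x, φ x ≠ r' ↔ x ≠ r := fun x => by rw [← hφr, φ.injective.ne_iff]
  rw [R.adj_iff, R'.adj_iff, hne, hne, ← hφp, ← hφp, φ.injective.eq_iff, φ.injective.eq_iff]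

end

/-! ### Invariance under isomorphism and existence of a minimizer -/

section
variable {V : Type*} [Fintype V]

lemma isDirichletEigenpair_of_iso {G G' : SimpleGraph V} (φ : G ≃g G') {μ : ℝ} {f : V → ℝ}
    (h : IsDirichletEigenpair G μ f) : IsDirichletEigenpair G' μ (f ∘ φ.symm) := by
  have hd : ∀ v, G'.degree v = G.degree (φ.symm v) := fun v => by
    rw [← SimpleGraph.Iso.degree_eq φ]; simp
  obtain ⟨h0, hb, hl⟩ := h
  refine ⟨?_, fun v hv => hb _ ?_, fun v hv => ?_⟩
  · intro h
    apply h0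
    funext v
    have := congrFun h (φ v)
    simpa using this
  · unfold IsBoundary at *
    rwa [← hd]
  · have hv' : IsInterior G (φ.symm v) := by unfold IsInterior at *; rwa [← hd]
    have := hl _ hv'
    unfold lapApply at *
    rw [hd]
    simp only [Function.comp]
    rw [← this]
    congr 1
    refine Finset.sum_equiv φ.symm.toEquiv (fun w => ?_) (fun w _ => rfl)
    simp only [SimpleGraph.mem_neighborFinset]
    exact (φ.symm.map_adj_iff).symm

lemma dirichletLambda_iso {G G' : SimpleGraph V} (φ : G ≃g G') :
    dirichletLambda G = dirichletLambda G' := by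
  unfold dirichletLambda
  congr 1
  ext μ
  exact ⟨fun ⟨f, hf⟩ => ⟨_, isDirichletEigenpair_of_iso φ hf⟩,
    fun ⟨f, hf⟩ => ⟨_, isDirichletEigenpair_of_iso φ.symm hf⟩⟩

lemma isSLOStarTree_of_hasFKPi {π : Multiset ℕ} {G : SimpleGraph (Fin (Multiset.card π))}
    (h : hasFKPi π G) : IsSLOStarTree G :=
  isSLOStarTree_of_isMin h.1.1 fun G' h1 h2 => h.2 G' ⟨h1, h2.trans h.1.2⟩

lemma exists_hasFKPi {π : Multiset ℕ} {G : SimpleGraph (Fin (Multiset.card π))}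
    (h : inClassPi π G) : ∃ G', hasFKPi π G' := by
  obtain ⟨G', h1, h2⟩ := Finset.exists_min_image
    (univ.filter fun H : SimpleGraph (Fin (Multiset.card π)) => inClassPi π H)
    (fun H => dirichletLambda H) ⟨G, by simpa using h⟩
  simp only [Finset.mem_filter, Finset.mem_univ, true_and] at h1 h2
  exact ⟨G', h1, h2⟩

end

/-- **Theorem 3.** A tree `G` with degree sequence `π` has the Faber-Krahn
property in the class `T_π` if and only if it is an SLO*-tree; `G` is then
uniquely determined up to isomorphism. -/
theorem faberKrahn_Tpi (π : Multiset ℕ)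
    (G : SimpleGraph (Fin (Multiset.card π))) (hG : inClassPi π G) :
    (hasFKPi π G ↔ IsSLOStarTree G) ∧
    (hasFKPi π G → ∀ G' : SimpleGraph (Fin (Multiset.card π)), hasFKPi π G' →
        Nonempty (G ≃g G')) := by
  refine ⟨⟨isSLOStarTree_of_hasFKPi, fun h => ?_⟩, fun h G' h' => ?_⟩
  · obtain ⟨G', h'⟩ := exists_hasFKPi hG
    obtain ⟨φ⟩ := iso_of_isSLOStarTree h (isSLOStarTree_of_hasFKPi h') (hG.2.trans h'.1.2.symm)
    exact ⟨hG, fun H hH => (dirichletLambda_iso φ).trans_le (h'.2 H hH)⟩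
  · exact iso_of_isSLOStarTree (isSLOStarTree_of_hasFKPi h) (isSLOStarTree_of_hasFKPi h')
      (h.1.2.trans h'.1.2.symm)

end FK
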